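/- arXiv:1408.5746 — 2 statements merged into one kernel-verified Lean document; each statement's English description precedes it below -/
import Mathlib

section
/- Let h be a positive integer and r = 2h. Let μ be a centered Gaussian probability measure on the finite-dimensional real normed space Matrix (Fin r) (Fin r) ℝ (i.e., the pushforward of μ under every continuous linear functional is a Gaussian measure on ℝ, and ∫ S dμ(S) = 0). Set K(α,i,β,j) := ∫ (S α i)·(S β j) dμ(S). Let Λ := ExteriorAlgebra ℝ (Fin r → ℝ), with e_α the image of the α-th standard basis vector and etop := e_0 * e_1 * ⋯ * e_{r−1}, and equip Λ ⊗[ℝ] Λ with the tensor-product algebra structure in which (a ⊗ b)·(c ⊗ d) = (a·c) ⊗ (b·d). Define Ξ := Σ_{α < β, i < j} ( K(α,i,β,j) − K(α,j,β,i) ) • ((e_α * e_β) ⊗ (e_i * e_j)) ∈ Λ ⊗ Λ. Then the expected determinant satisfies ( h! · ∫ det S dμ(S) ) • (etop ⊗ etop) = Ξ^h. -/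
open MeasureTheory ProbabilityTheory
open scoped TensorProduct Matrix

attribute [local instance] Matrix.normedAddCommGroup Matrix.normedSpace

/-- Measurable space structure on real matrices, coming from the product structure on
`Fin n → Fin m → ℝ` (of which `Matrix (Fin n) (Fin m) ℝ` is a copy). -/
instance matrixMeasurableSpace (n m : ℕ) :
    MeasurableSpace (Matrix (Fin n) (Fin m) ℝ) :=
  inferInstanceAs (MeasurableSpace (Fin n → Fin m → ℝ))


lemma sgbc_moment (v : NNReal) (h : ℕ) :
    (2 : ℝ) ^ h * h.factorial * ∫ x, x ^ (2 * h) ∂(gaussianReal 0 v)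
      = (2 * h).factorial * (v : ℝ) ^ h := by
  have hm : mgf id (gaussianReal 0 v) = fun t : ℝ => Real.exp (v * t ^ 2 / 2) := by
    rw [mgf_id_gaussianReal]; simp
  set g : ℝ → ℝ := fun t : ℝ => Real.exp (v * t ^ 2 / 2) with hg
  have hc : ContDiff ℝ ⊤ g := by rw [hg]; fun_prop
  have hd : ∀ n t, HasDerivAt (iteratedDeriv n g) (iteratedDeriv (n + 1) g t) t := by
    intro n t
    rw [iteratedDeriv_succ]
    exact ((hc.differentiable_iteratedDeriv n (by exact_mod_cast WithTop.coe_lt_top _)) t).hasDerivAt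
  have h1 : ∀ t, iteratedDeriv 1 g t = v * t * g t := by
    intro t
    have := hd 0 t
    rw [iteratedDeriv_zero] at this
    refine this.unique ?_
    have h2 : HasDerivAt (fun t : ℝ => (v : ℝ) * t ^ 2 / 2) (v * t) t := by
      have := (((hasDerivAt_id' t).fun_pow 2).const_mul (v : ℝ)).div_const 2
      exact this.congr_deriv (by push_cast; ring)
    exact h2.exp.congr_deriv (by rw [hg]; ring)
  have hrec : ∀ n t, iteratedDeriv (n + 2) g t
      = v * t * iteratedDeriv (n + 1) g t + v * (n + 1) * iteratedDeriv n g t := by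
    intro n
    induction n with
    | zero =>
      intro t
      refine (hd 1 t).unique ?_
      have e : iteratedDeriv 1 g = fun t => v * t * g t := funext h1
      have h0 := hd 0 t
      rw [iteratedDeriv_zero] at h0
      have := ((hasDerivAt_id' t).const_mul (v : ℝ)).fun_mul h0
      rw [e]
      refine this.congr_deriv ?_
      simp only [zero_add, h1, iteratedDeriv_zero]
      push_cast; ring
    | succ n ih =>
      intro t
      refine (hd (n + 2) t).unique ?_
      have e : iteratedDeriv (n + 2) g = _ := funext ih
      have := (((hasDerivAt_id' t).const_mul (v : ℝ)).fun_mul (hd (n + 1) t)).fun_add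
        ((hd n t).const_mul ((v : ℝ) * (n + 1)))
      rw [← e] at this
      refine this.congr_deriv ?_
      push_cast; ring
  have hmom : ∀ n, iteratedDeriv n g 0 = ∫ x, x ^ n ∂(gaussianReal 0 v) := by
    intro n
    rw [← hm, iteratedDeriv_mgf_zero]
    · simp
    · simp [integrableExpSet_id_gaussianReal]
  rw [← hmom]
  induction h with
  | zero => simp [hg]
  | succ h ih =>
    rw [show 2 * (h + 1) = 2 * h + 2 by ring, hrec, Nat.factorial_succ, Nat.factorial_succ,
      Nat.factorial_succ]
    push_cast
    linear_combination (2 * (h + 1) * v * (2 * h + 1) : ℝ) * ih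

lemma sgbc_wick {ι Ω : Type*} [Fintype ι] [MeasurableSpace Ω] (μ : Measure Ω)
    (X : ι → Ω → ℝ)
    (hint : ∀ n (f : Fin n → ι), Integrable (fun ω => ∏ m, X (f m) ω) μ)
    (h : ℕ)
    (hmom : ∀ t : ι → ℝ, (2 : ℝ) ^ h * h.factorial * ∫ ω, (∑ k, t k * X k ω) ^ (2 * h) ∂μ
      = (2 * h).factorial * (∫ ω, (∑ k, t k * X k ω) ^ 2 ∂μ) ^ h)
    {A : Type*} [Ring A] [Algebra ℝ A] (x : ι → A) (hx : ∀ k l, x k * x l = x l * x k) :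
    ((2 : ℝ) ^ h * h.factorial) • ∑ f : Fin (2 * h) → ι, (∫ ω, ∏ m, X (f m) ω ∂μ) •
        (List.ofFn fun m => x (f m)).prod
      = ((2 * h).factorial : ℝ) • (∑ k, ∑ l, (∫ ω, X k ω * X l ω ∂μ) • (x k * x l)) ^ h := by
  classical
  have hint2 : ∀ k l, Integrable (fun ω => X k ω * X l ω) μ := by
    intro k l
    simpa [Fin.prod_univ_two] using hint 2 ![k, l]
  -- polynomial identity
  have key : MvPolynomial.C ((2 : ℝ) ^ h * h.factorial) *
      ∑ f : Fin (2 * h) → ι, MvPolynomial.C (∫ ω, ∏ m, X (f m) ω ∂μ) *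
        (List.ofFn fun m => (MvPolynomial.X (f m) : MvPolynomial ι ℝ)).prod
      = MvPolynomial.C ((2 * h).factorial : ℝ) *
        (∑ k, ∑ l, MvPolynomial.C (∫ ω, X k ω * X l ω ∂μ) *
          (MvPolynomial.X k * MvPolynomial.X l)) ^ h := by
    apply MvPolynomial.funext
    intro t
    simp only [map_mul, map_sum, map_pow, MvPolynomial.eval_C, MvPolynomial.eval_X,
      List.prod_ofFn, map_prod]
    have hm := hmom t
    have e1 : ∫ ω, (∑ k, t k * X k ω) ^ (2 * h) ∂μ
        = ∑ f : Fin (2 * h) → ι, (∫ ω, ∏ m, X (f m) ω ∂μ) * ∏ m, t (f m) := by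
      simp_rw [← integral_mul_const]
      rw [← integral_finsetSum]
      · congr 1; ext ω
        have := Finset.prod_univ_sum (fun _ : Fin (2 * h) => (Finset.univ : Finset ι))
          (fun _ k => t k * X k ω)
        simp only [Finset.prod_const, Finset.card_univ, Fintype.card_fin,
          Fintype.piFinset_univ] at this
        rw [this]
        refine Finset.sum_congr rfl fun f _ => ?_
        rw [Finset.prod_mul_distrib, mul_comm]
      · intro f _
        exact (hint _ f).mul_const _
    have e2 : ∫ ω, (∑ k, t k * X k ω) ^ 2 ∂μ
        = ∑ k, ∑ l, (∫ ω, X k ω * X l ω ∂μ) * (t k * t l) := by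
      simp_rw [← integral_mul_const]
      simp_rw [pow_two, Finset.sum_mul_sum]
      rw [integral_finsetSum]
      · refine Finset.sum_congr rfl fun k _ => ?_
        rw [integral_finsetSum]
        · refine Finset.sum_congr rfl fun l _ => ?_
          congr 1; ext ω; ring
        · intro l _
          refine ((hint2 k l).mul_const (t k * t l)).congr (Filter.Eventually.of_forall fun ω => ?_)
          simp only []; ring
      · intro k _
        refine integrable_finsetSum _ fun l _ => ?_
        refine ((hint2 k l).mul_const (t k * t l)).congr (Filter.Eventually.of_forall fun ω => ?_)
        simp only []; ring
    rw [e1, e2] at hm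
    simpa using hm
  let _ : CommRing (Algebra.adjoin ℝ (Set.range x)) :=
    Algebra.adjoinCommRingOfComm ℝ (by rintro _ ⟨k, rfl⟩ _ ⟨l, rfl⟩; exact hx k l)
  let y : ι → Algebra.adjoin ℝ (Set.range x) :=
    fun k => ⟨x k, Algebra.subset_adjoin ⟨k, rfl⟩⟩
  let φ : MvPolynomial ι ℝ →ₐ[ℝ] A :=
    (Algebra.adjoin ℝ (Set.range x)).val.comp (MvPolynomial.aeval y)
  have hφ : ∀ k, φ (MvPolynomial.X k) = x k := by intro k; simp [φ, y]
  have hφC : ∀ c, φ (MvPolynomial.C c) = algebraMap ℝ A c := fun c => φ.commutes c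
  have := congrArg φ key
  simp only [map_mul φ, map_sum φ, map_pow φ, hφ, hφC, map_list_prod φ, List.map_ofFn] at this
  simp only [Algebra.smul_def]
  simpa [Function.comp_def, hφ] using this


noncomputable def sgbcEps {r : ℕ} (a : Fin r → Fin r) : ℝ :=
  ((1 : Matrix (Fin r) (Fin r) ℝ).submatrix a id).det

lemma sgbcEps_perm {r : ℕ} (σ : Equiv.Perm (Fin r)) :
    sgbcEps σ = ((Equiv.Perm.sign σ : ℤ) : ℝ) := by
  unfold sgbcEps
  rw [Matrix.det_permute]; simp

lemma sgbcEps_of_not_inj {r : ℕ} (a : Fin r → Fin r) (ha : ¬ Function.Injective a) :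
    sgbcEps a = 0 := by
  unfold sgbcEps
  simp only [Function.Injective, not_forall] at ha
  obtain ⟨i, j, hij, hne⟩ := ha
  exact Matrix.det_zero_of_row_eq hne (by ext k; rw [Matrix.submatrix_apply, Matrix.submatrix_apply, hij])

lemma sgbc_exists_perm {r : ℕ} (a : Fin r → Fin r) (ha : Function.Injective a) :
    ∃ σ : Equiv.Perm (Fin r), a = σ :=
  ⟨Equiv.ofBijective a (Finite.injective_iff_bijective.mp ha), rfl⟩

lemma sgbc_ofFn {r : ℕ} (a : Fin r → Fin r) :
    (List.ofFn fun m => ExteriorAlgebra.ι ℝ (Pi.single (a m) 1 : Fin r → ℝ)).prod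
      = sgbcEps a •
        (List.ofFn fun m => ExteriorAlgebra.ι ℝ (Pi.single m 1 : Fin r → ℝ)).prod := by
  rw [← ExteriorAlgebra.ιMulti_apply (R := ℝ) (fun m => (Pi.single (a m) 1 : Fin r → ℝ)),
    ← ExteriorAlgebra.ιMulti_apply (R := ℝ) (fun m => (Pi.single m 1 : Fin r → ℝ))]
  by_cases ha : Function.Injective a
  · obtain ⟨σ, rfl⟩ := sgbc_exists_perm a ha
    rw [sgbcEps_perm]
    have := (ExteriorAlgebra.ιMulti ℝ r).map_perm (fun m => (Pi.single m 1 : Fin r → ℝ)) σ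
    rw [Function.comp_def] at this
    rw [this, Int.cast_smul_eq_zsmul]; rfl
  · rw [sgbcEps_of_not_inj a ha, zero_smul]
    apply AlternatingMap.map_eq_zero_of_not_injective
    intro hi
    exact ha fun i j hij => hi (by simp [hij])

lemma sgbc_sum_eps {r : ℕ} (F : (Fin r → Fin r) → ℝ) :
    ∑ a, sgbcEps a * F a = ∑ σ : Equiv.Perm (Fin r), ((Equiv.Perm.sign σ : ℤ) : ℝ) * F σ := by
  symm
  apply Fintype.sum_of_injective (fun σ : Equiv.Perm (Fin r) => (σ : Fin r → Fin r))
  · exact DFunLike.coe_injective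
  · intro a ha
    rw [sgbcEps_of_not_inj, zero_mul]
    intro hi
    obtain ⟨σ, rfl⟩ := sgbc_exists_perm a hi
    exact ha ⟨σ, rfl⟩
  · intro σ; rw [sgbcEps_perm]

lemma sgbc_sum_det {r : ℕ} (S : Matrix (Fin r) (Fin r) ℝ) :
    ∑ f : Fin r → Fin r × Fin r, (sgbcEps (fun m => (f m).1) * sgbcEps (fun m => (f m).2)) *
      ∏ m, S (f m).1 (f m).2 = r.factorial * S.det := by
  have e1 := (Equiv.arrowProdEquivProdArrow (Fin r) (fun _ => Fin r) (fun _ => Fin r)).sum_comp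
    (fun p : (Fin r → Fin r) × (Fin r → Fin r) => (sgbcEps p.1 * sgbcEps p.2) *
      ∏ m, S (p.1 m) (p.2 m))
  refine Eq.trans e1 ?_
  rw [Fintype.sum_prod_type]
  simp_rw [mul_assoc, ← Finset.mul_sum]
  have e2 : ∀ M : Matrix (Fin r) (Fin r) ℝ,
      ∑ b, sgbcEps b * ∏ m, M m (b m) = M.det := by
    intro M
    rw [sgbc_sum_eps (fun b => ∏ m, M m (b m)), ← Matrix.det_transpose, Matrix.det_apply']
    rfl
  have e3 : ∀ a : Fin r → Fin r, ∑ b, sgbcEps b * ∏ m, S (a m) (b m) = (S.submatrix a id).det :=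
    fun a => e2 (S.submatrix a id)
  simp_rw [e3]
  rw [sgbc_sum_eps (fun a => (S.submatrix a id).det)]
  simp_rw [Matrix.det_permute, ← mul_assoc, ← Int.cast_mul, ← Units.val_mul, Int.units_mul_self]
  simp [Fintype.card_perm]

lemma sgbc_sum_lt {r : ℕ} {M : Type*} [AddCommMonoid M] (g : Fin r → Fin r → M)
    (hg : ∀ a, g a a = 0) :
    ∑ a, ∑ b, g a b = ∑ a, ∑ b, if a < b then g a b + g b a else 0 := by
  have : ∀ a b, g a b = (if a < b then g a b else 0) + (if b < a then g a b else 0) := by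
    intro a b
    rcases lt_trichotomy a b with h | h | h
    · simp [h, h.not_gt]
    · subst h; simp [hg]
    · simp [h, h.not_gt]
  have e2 : ∀ a b, (if a < b then g a b + g b a else 0)
      = (if a < b then g a b else 0) + (if a < b then g b a else 0) := by
    intro a b; split_ifs <;> simp
  simp_rw [e2, Finset.sum_add_distrib]
  rw [Finset.sum_congr rfl fun a _ => Finset.sum_congr rfl fun b _ => this a b]
  simp_rw [Finset.sum_add_distrib]
  congr 1
  rw [Finset.sum_comm]

lemma sgbc_Xi {r : ℕ} {A : Type*} [Ring A] [Algebra ℝ A] (K : Fin r → Fin r → Fin r → Fin r → ℝ)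
    (hK : ∀ a i b j, K a i b j = K b j a i) (w : Fin r → Fin r → Fin r → Fin r → A)
    (h1 : ∀ a b i j, w b a i j = - w a b i j) (h2 : ∀ a b i j, w a b j i = - w a b i j)
    (h3 : ∀ a i j, w a a i j = 0) (h4 : ∀ a b i, w a b i i = 0) :
    ∑ k : Fin r × Fin r, ∑ l : Fin r × Fin r, K k.1 k.2 l.1 l.2 • w k.1 l.1 k.2 l.2
    = (2 : ℝ) • ∑ a, ∑ b, ∑ i, ∑ j,
        if a < b ∧ i < j then (K a i b j - K a j b i) • w a b i j else 0 := by
  simp_rw [Fintype.sum_prod_type]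
  rw [Finset.sum_congr rfl fun a _ => Finset.sum_comm,
    sgbc_sum_lt (fun a b => ∑ i, ∑ j, K a i b j • w a b i j) (by simp [h3])]
  simp_rw [Finset.smul_sum]
  refine Finset.sum_congr rfl fun a _ => Finset.sum_congr rfl fun b _ => ?_
  by_cases hab : a < b
  · simp only [hab, if_true, true_and]
    rw [sgbc_sum_lt (fun i j => K a i b j • w a b i j) (by simp [h4]),
      sgbc_sum_lt (fun i j => K b i a j • w b a i j) (by simp [h4]), ← Finset.sum_add_distrib]
    refine Finset.sum_congr rfl fun i _ => ?_
    rw [← Finset.sum_add_distrib]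
    refine Finset.sum_congr rfl fun j _ => ?_
    split_ifs
    · rw [h2 a b i j, h1 a b i j, h1 a b j i, h2 a b i j, hK b i a j, hK b j a i]
      module
    · simp
  · simp [hab]

lemma sgbc_entry_meas {r : ℕ} (i j : Fin r) :
    Measurable (fun S : Matrix (Fin r) (Fin r) ℝ => S i j) :=
  (measurable_pi_apply j).comp (measurable_pi_apply (X := fun _ : Fin r => Fin r → ℝ) i)

lemma sgbc_gauss {r : ℕ}
    (μ : Measure (Matrix (Fin r) (Fin r) ℝ)) [IsProbabilityMeasure μ]
    (hgauss : ∀ L : Matrix (Fin r) (Fin r) ℝ →L[ℝ] ℝ,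
      ∃ (a : ℝ) (v : NNReal), μ.map L = gaussianReal a v)
    (hcentered : (∫ S, S ∂μ) = 0) :
    (∀ i j (p : ENNReal), p ≠ ⊤ → MemLp (fun S : Matrix (Fin r) (Fin r) ℝ => S i j) p μ) ∧
    ∀ t : Fin r × Fin r → ℝ, ∃ v : NNReal,
      μ.map (fun S : Matrix (Fin r) (Fin r) ℝ => ∑ k, t k * S k.1 k.2) = gaussianReal 0 v := by
  let L : (Fin r × Fin r → ℝ) → Matrix (Fin r) (Fin r) ℝ →L[ℝ] ℝ := fun t =>
    LinearMap.toContinuousLinearMap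
      (∑ k : Fin r × Fin r, t k • Matrix.entryLinearMap ℝ ℝ k.1 k.2)
  have hL : ∀ t S, L t S = ∑ k, t k * S k.1 k.2 := by
    intro t S
    simp [L]
  have hLm : ∀ t, Measurable (L t) := by
    intro t
    have : (L t : Matrix (Fin r) (Fin r) ℝ → ℝ) = fun S => ∑ k, t k * S k.1 k.2 := funext (hL t)
    rw [this]
    exact Finset.measurable_sum _ fun k _ => (sgbc_entry_meas k.1 k.2).const_mul _
  have hLp : ∀ t (p : ENNReal), p ≠ ⊤ → MemLp (L t) p μ := by
    intro t p hp
    obtain ⟨a, v, hv⟩ := hgauss (L t)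
    have := memLp_id_gaussianReal' (μ := a) (v := v) p hp
    rw [← hv] at this
    exact (memLp_map_measure_iff aestronglyMeasurable_id (hLm t).aemeasurable).1 this
  have hLp' : ∀ i j (p : ENNReal), p ≠ ⊤ →
      MemLp (fun S : Matrix (Fin r) (Fin r) ℝ => S i j) p μ := by
    intro i j p hp
    have := hLp (Pi.single (i, j) 1) p hp
    convert this using 2 with S
    rw [hL]
    simp [Pi.single_apply]
  refine ⟨hLp', fun t => ?_⟩
  have hI1 : ∀ i j, Integrable (fun S : Matrix (Fin r) (Fin r) ℝ => S i j) μ :=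
    fun i j => memLp_one_iff_integrable.1 (hLp' i j 1 (by simp))
  have hz : ∀ i j, ∫ S, S i j ∂μ = 0 := by
    intro i j
    let F : Matrix (Fin r) (Fin r) ℝ → Fin r → Fin r → ℝ := fun S => S
    have hc : ∫ S, F S ∂μ = 0 := hcentered
    have hI2 : ∀ i, Integrable (fun S => F S i) μ :=
      fun i => Integrable.of_eval fun j => hI1 i j
    have e1 := eval_integral (f := F) hI2 i
    have e2 := eval_integral (f := fun S => F S i) (fun j => hI1 i j) j
    rw [← e1, hc] at e2
    exact e2.symm
  obtain ⟨a, v, hv⟩ := hgauss (L t)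
  have ha : a = 0 := by
    have h1 : ∫ S, L t S ∂μ = a := by
      rw [← integral_id_gaussianReal (μ := a) (v := v), ← hv,
        integral_map (hLm t).aemeasurable (by fun_prop)]
    rw [← h1]
    simp_rw [hL]
    rw [integral_finsetSum _ fun k _ => (hI1 k.1 k.2).const_mul _]
    simp_rw [integral_const_mul, hz]
    simp
  subst ha
  refine ⟨v, ?_⟩
  rw [← hv]
  congr 1
  exact (funext (hL t)).symm

lemma sgbc_mom {Ω : Type*} [MeasurableSpace Ω] (μ : Measure Ω) [IsProbabilityMeasure μ]
    (X : Ω → ℝ) (v : NNReal) (hX : Measurable X) (hv : μ.map X = gaussianReal 0 v) (h : ℕ) :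
    (2 : ℝ) ^ h * h.factorial * ∫ ω, X ω ^ (2 * h) ∂μ
      = (2 * h).factorial * (∫ ω, X ω ^ 2 ∂μ) ^ h := by
  have e : ∀ n, ∫ ω, X ω ^ n ∂μ = ∫ x, x ^ n ∂(gaussianReal 0 v) := by
    intro n
    rw [← hv, integral_map hX.aemeasurable (by fun_prop)]
  have h1 := sgbc_moment v 1
  have h2 : ∫ x, x ^ 2 ∂(gaussianReal 0 v) = v := by
    norm_num [Nat.factorial] at h1; linarith
  rw [e, e, h2, sgbc_moment]

/-- Expected determinant of a centered Gaussian random `r × r` matrix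
(`r = 2h`): with second moments `K(α,i,β,j) = E (S α i * S β j)` and the `(2,2)`-double form
`Ξ = ∑_{α<β, i<j} (K(α,i,β,j) − K(α,j,β,i)) • ((e α * e β) ⊗ (e i * e j))`, one has
`(h! ⬝ E (det S)) • (etop ⊗ etop) = Ξ ^ h`. -/
theorem stochasticGBC.expected_det_eq_pfaffian_of_covariance
    (h : ℕ) (hh : 0 < h) (r : ℕ) (hr : r = 2 * h)
    (μ : Measure (Matrix (Fin r) (Fin r) ℝ)) [IsProbabilityMeasure μ]
    (hgauss : ∀ L : Matrix (Fin r) (Fin r) ℝ →L[ℝ] ℝ,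
      ∃ (a : ℝ) (v : NNReal), μ.map L = gaussianReal a v)
    (hcentered : (∫ S, S ∂μ) = 0) :
    let K : Fin r → Fin r → Fin r → Fin r → ℝ :=
      fun α i β j => ∫ S, S α i * S β j ∂μ
    let e : Fin r → ExteriorAlgebra ℝ (Fin r → ℝ) :=
      fun α => ExteriorAlgebra.ι ℝ (Pi.single α 1)
    let etop : ExteriorAlgebra ℝ (Fin r → ℝ) := ((List.finRange r).map e).prod
    let Ξ : ExteriorAlgebra ℝ (Fin r → ℝ) ⊗[ℝ] ExteriorAlgebra ℝ (Fin r → ℝ) :=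
      ∑ α : Fin r, ∑ β : Fin r, ∑ i : Fin r, ∑ j : Fin r,
        if α < β ∧ i < j then
          (K α i β j - K α j β i) • ((e α * e β) ⊗ₜ[ℝ] (e i * e j))
        else 0
    ((h.factorial : ℝ) * ∫ S, Matrix.det S ∂μ) • (etop ⊗ₜ[ℝ] etop) = Ξ ^ h := by
  subst hr
  intro K e etop Ξ
  obtain ⟨hLp, hG⟩ := sgbc_gauss μ hgauss hcentered
  have hint : ∀ n (f : Fin n → Fin (2 * h) × Fin (2 * h)),
      Integrable (fun S : Matrix (Fin (2 * h)) (Fin (2 * h)) ℝ => ∏ m, S (f m).1 (f m).2) μ := by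
    intro n f
    rcases Nat.eq_zero_or_pos n with rfl | hn
    · simp
    have := MemLp.prod' (s := (Finset.univ : Finset (Fin n))) (μ := μ)
      (f := fun m (S : Matrix (Fin (2 * h)) (Fin (2 * h)) ℝ) => S (f m).1 (f m).2)
      (p := fun _ => (n : ENNReal)) (fun m _ => hLp _ _ _ (by simp))
    refine memLp_one_iff_integrable.1 ?_
    convert this using 1
    simp only [Finset.sum_const, Finset.card_univ, Fintype.card_fin, nsmul_eq_mul, one_div]
    rw [ENNReal.mul_inv_cancel (by exact_mod_cast hn.ne') (by simp), inv_one]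
  have hanti : ∀ a b, e b * e a = - (e a * e b) := fun a b =>
    eq_neg_of_add_eq_zero_left (ExteriorAlgebra.ι_add_mul_swap _ _)
  have hsq : ∀ a, e a * e a = 0 := fun a => ExteriorAlgebra.ι_sq_zero _
  have hw := sgbc_wick μ (fun (k : Fin (2 * h) × Fin (2 * h)) S => S k.1 k.2) hint h
    (fun t => by
      obtain ⟨v, hv⟩ := hG t
      exact sgbc_mom μ _ v
        (Finset.measurable_sum _ fun k _ => (sgbc_entry_meas k.1 k.2).const_mul _) hv h)
    (fun k => e k.1 ⊗ₜ[ℝ] e k.2) (by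
      intro k l
      simp only [Algebra.TensorProduct.tmul_mul_tmul]
      rw [hanti l.1 k.1, hanti l.2 k.2, TensorProduct.neg_tmul, TensorProduct.tmul_neg, neg_neg])
  have hXi : ∑ k : Fin (2 * h) × Fin (2 * h), ∑ l : Fin (2 * h) × Fin (2 * h),
      (∫ S, S k.1 k.2 * S l.1 l.2 ∂μ) • ((e k.1 ⊗ₜ[ℝ] e k.2) * (e l.1 ⊗ₜ[ℝ] e l.2))
      = (2 : ℝ) • Ξ := by
    simp only [Algebra.TensorProduct.tmul_mul_tmul]
    refine sgbc_Xi K ?_ (fun a b i j => (e a * e b) ⊗ₜ[ℝ] (e i * e j)) ?_ ?_ ?_ ?_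
    · intro a i b j
      simp only [K, mul_comm]
    · intro a b i j
      simp only [hanti a b, TensorProduct.neg_tmul]
    · intro a b i j
      simp only [hanti i j, TensorProduct.tmul_neg]
    · intro a i j
      simp only [hsq, TensorProduct.zero_tmul]
    · intro a b i
      simp only [hsq, TensorProduct.tmul_zero]
  have hprod : ∀ (n : ℕ) (a b : Fin n → Fin (2 * h)),
      (List.ofFn fun m => e (a m) ⊗ₜ[ℝ] e (b m)).prod
        = (List.ofFn fun m => e (a m)).prod ⊗ₜ[ℝ] (List.ofFn fun m => e (b m)).prod := by
    intro n
    induction n with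
    | zero => intro a b; simp [Algebra.TensorProduct.one_def]
    | succ n ih =>
      intro a b
      simp only [List.ofFn_succ, List.prod_cons, ih, Algebra.TensorProduct.tmul_mul_tmul]
  have htop : etop = (List.ofFn fun m => e m).prod := by
    simp only [etop, List.ofFn_eq_map]
  have heps : ∀ a : Fin (2 * h) → Fin (2 * h),
      (List.ofFn fun m => e (a m)).prod = sgbcEps a • etop := by
    intro a; rw [htop]; exact sgbc_ofFn a
  have hL : ∑ f : Fin (2 * h) → Fin (2 * h) × Fin (2 * h),
      (∫ S, ∏ m, S (f m).1 (f m).2 ∂μ) •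
        (List.ofFn fun m => e (f m).1 ⊗ₜ[ℝ] e (f m).2).prod
      = (((2 * h).factorial : ℝ) * ∫ S, Matrix.det S ∂μ) • (etop ⊗ₜ[ℝ] etop) := by
    rw [← integral_const_mul]
    simp_rw [← sgbc_sum_det]
    rw [integral_finsetSum _ fun f _ => (hint _ f).const_mul _, Finset.sum_smul]
    refine Finset.sum_congr rfl fun f _ => ?_
    rw [hprod _ (fun m => (f m).1) (fun m => (f m).2), heps, heps, TensorProduct.smul_tmul_smul,
      smul_smul, integral_const_mul]
    congr 1
    exact mul_comm _ _
  rw [hL] at hw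
  have hw2 := hw.trans (congrArg (fun z => ((2 * h).factorial : ℝ) • z ^ h) hXi)
  simp only [smul_pow, smul_smul] at hw2
  have hne : ((2 * h).factorial : ℝ) * 2 ^ h ≠ 0 := by positivity
  refine smul_right_injective _ hne ?_
  simp only [smul_smul]
  rw [← hw2]
  congr 1
  ring
end

section
/- Let h be a positive integer and r = 2h. Let μ be a centered Gaussian probability measure on Matrix (Fin r) (Fin r) ℝ (i.e., the pushforward of μ under every continuous linear functional is a Gaussian measure on ℝ, and ∫ S dμ(S) = 0), with second moments K(α,i,β,j) := ∫ (S α i)·(S β j) dμ(S), and let M ∈ Matrix (Fin r) (Fin r) ℝ be a fixed deterministic matrix. Let Λ := ExteriorAlgebra ℝ (Fin r → ℝ), with e_α the image of the α-th standard basis vector and etop := e_0 * ⋯ * e_{r−1}, and equip Λ ⊗[ℝ] Λ with the tensor-product algebra structure in which (a ⊗ b)·(c ⊗ d) = (a·c) ⊗ (b·d). Define ω_M := Σ_{α,i} (M α i) • (e_α ⊗ e_i) and Ξ := Σ_{α < β, i < j} ( K(α,i,β,j) − K(α,j,β,i) ) • ((e_α * e_β) ⊗ (e_i * e_j)). Then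 ( ∫ det(M + S) dμ(S) ) • (etop ⊗ etop) = Σ_{j=0}^{h} (1 / ((r − 2j)! · j!)) • ( ω_M^{r−2j} · Ξ^{j} ), the product on the right being taken in Λ ⊗ Λ. -/
open MeasureTheory ProbabilityTheory
open scoped TensorProduct Matrix

attribute [local instance] Matrix.normedAddCommGroup Matrix.normedSpace

theorem gm_rec (v : ℝ) (n : ℕ) (t : ℝ) :
    iteratedDeriv (n+2) (fun t : ℝ => Real.exp (v * t^2/2)) t =
      v * t * iteratedDeriv (n+1) (fun t : ℝ => Real.exp (v * t^2/2)) t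
       + (n+1) * v * iteratedDeriv n (fun t : ℝ => Real.exp (v * t^2/2)) t := by
  set f := (fun t : ℝ => Real.exp (v * t^2/2)) with hf
  have hsm : ContDiff ℝ ⊤ f := by rw [hf]; fun_prop
  have hd : ∀ n t, HasDerivAt (iteratedDeriv n f) (iteratedDeriv (n+1) f t) t := by
    intro n t
    have : Differentiable ℝ (iteratedDeriv n f) := hsm.differentiable_iteratedDeriv n (by exact_mod_cast WithTop.coe_lt_top _)
    rw [iteratedDeriv_succ]
    exact (this t).hasDerivAt
  have h1 : ∀ t, iteratedDeriv 1 f t = v * t * iteratedDeriv 0 f t := by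
    intro t
    have h := hd 0 t
    rw [iteratedDeriv_zero] at h ⊢
    refine h.unique ?_
    have := (((hasDerivAt_id t).pow 2).const_mul v |>.div_const 2).exp
    convert! this using 1
    simp [hf]; ring
  induction n generalizing t with
  | zero =>
    have h := hd 1 t
    have h' : HasDerivAt (fun t => v * t * iteratedDeriv 0 f t) _ t :=
      ((hasDerivAt_id t).const_mul v).mul (hd 0 t)
    rw [← funext h1] at h'
    have := h.unique h'
    simp at this ⊢
    linarith
  | succ n ih =>
    have h := hd (n+2) t
    have h' : HasDerivAt (fun t => v * t * iteratedDeriv (n+1) f t + (n+1) * v * iteratedDeriv n f t) _ t :=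
      (((hasDerivAt_id t).const_mul v).mul (hd (n+1) t)).add ((hd n t).const_mul ((n+1) * v))
    rw [← funext ih] at h'
    have := h.unique h'
    simp at this ⊢
    linarith

theorem gm_eq (v : NNReal) (n : ℕ) :
    ∫ x, x^n ∂(gaussianReal 0 v) = iteratedDeriv n (fun t : ℝ => Real.exp (v * t^2/2)) 0 := by
  have h := iteratedDeriv_mgf_zero (X := id) (μ := gaussianReal 0 v) (by simp) n
  have h2 : mgf id (gaussianReal 0 v) = (fun t : ℝ => Real.exp (v * t^2/2)) := by
    ext t
    rw [mgf_gaussianReal (μ := 0) (v := v) (by simp)]; simp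
  rw [h2] at h
  rw [h]; simp

theorem gm_even (v : NNReal) (j : ℕ) :
    ∫ x, x^(2*j) ∂(gaussianReal 0 v) = ((2*j).factorial : ℝ) / (j.factorial) * ((v:ℝ)/2)^j := by
  rw [gm_eq]
  induction j with
  | zero => simp
  | succ j ih =>
    rw [show 2 * (j+1) = 2*j+2 by ring, gm_rec, ih]
    simp only [Nat.factorial_succ]
    push_cast
    field_simp
    ring

theorem gm_odd (v : NNReal) (j : ℕ) :
    ∫ x, x^(2*j+1) ∂(gaussianReal 0 v) = 0 := by
  rw [gm_eq]
  induction j with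
  | zero =>
    rw [← gm_eq]; simp
  | succ j ih =>
    rw [show 2 * (j+1) + 1 = (2*j+1)+2 by ring, gm_rec, ih]
    simp

theorem sum_even_aux (h : ℕ) (F : ℕ → ℝ) (hF : ∀ j, F (2*j+1) = 0) :
    ∑ k ∈ Finset.range (2*h+1), F k = ∑ j ∈ Finset.range (h+1), F (2*j) := by
  induction h with
  | zero => simp
  | succ h ih =>
    rw [show 2*(h+1)+1 = (2*h+1)+1+1 by ring, Finset.sum_range_succ, Finset.sum_range_succ, ih, hF,
      Finset.sum_range_succ _ (h+1)]
    simp [mul_add]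

theorem gm_shift {Ω : Type*} [MeasurableSpace Ω] {μ : Measure Ω} (Y : Ω → ℝ) (hY : AEMeasurable Y μ)
    (v : NNReal) (hv : μ.map Y = gaussianReal 0 v) (a : ℝ) (h : ℕ) :
    ∫ w, (a + Y w)^(2*h) ∂μ = ∑ j ∈ Finset.range (h+1),
      ((2*h).factorial : ℝ) / ((2*h-2*j).factorial * j.factorial) *
        (a^(2*h-2*j) * ((∫ w, Y w * Y w ∂μ)/2)^j) := by
  have hm : ∀ n : ℕ, ∫ w, Y w ^ n ∂μ = ∫ x, x^n ∂(gaussianReal 0 v) := by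
    intro n
    rw [← hv, integral_map hY (by fun_prop)]
  have hi : ∀ n : ℕ, Integrable (fun w => Y w ^ n) μ := by
    intro n
    have : MemLp id n (gaussianReal 0 v) := memLp_id_gaussianReal' _ (by simp)
    have := this.integrable_norm_pow'
    have h2 : Integrable (fun x : ℝ => x^n) (gaussianReal 0 v) := by
      refine this.mono (by fun_prop) ?_
      simp
    rw [← hv, integrable_map_measure (by fun_prop) hY] at h2
    exact h2
  have hvar : ∫ w, Y w * Y w ∂μ = v := by
    have := hm 2
    have h3 := gm_even v 1
    simp only [← pow_two, this]
    rw [mul_one] at h3; rw [h3]; simp [Nat.factorial]; ring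
  rw [hvar]
  simp_rw [add_comm a, add_pow]
  rw [integral_finsetSum _ (fun i _ => by
    simp_rw [mul_assoc]; exact (hi i).mul_const _)]
  simp_rw [mul_assoc, integral_mul_const, hm]
  rw [sum_even_aux h]
  · refine Finset.sum_congr rfl fun j hj => ?_
    have : 2 * j ≤ 2 * h := by simp at hj; omega
    rw [gm_even, Nat.cast_choose ℝ this]
    field_simp
  · intro j; rw [gm_odd]; simp

theorem gp_main {Ω : Type*} [MeasurableSpace Ω] {μ : Measure Ω} {σ : Type} [Fintype σ] [DecidableEq σ]
    [IsProbabilityMeasure μ]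
    (X : σ → Ω → ℝ) (hX : ∀ p, AEMeasurable (X p) μ)
    (hg : ∀ t : σ → ℝ, ∃ v : NNReal, μ.map (fun w => ∑ p, t p * X p w) = gaussianReal 0 v)
    (m : σ → ℝ) (h : ℕ) {B : Type} [CommRing B] [Algebra ℝ B] (x : σ → B) :
    (∀ f : Fin (2*h) → σ, Integrable (fun w => ∏ k, (m (f k) + X (f k) w)) μ) ∧
    ∑ f : Fin (2*h) → σ, (∫ w, ∏ k, (m (f k) + X (f k) w) ∂μ) • ∏ k, x (f k) =
    ∑ j ∈ Finset.range (h+1),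
      (((2*h).factorial : ℝ) / ((2*h-2*j).factorial * j.factorial)) •
        ((∑ p, m p • x p)^(2*h-2*j) *
          ((1/2 : ℝ) • ∑ p, ∑ q, (∫ w, X p w * X q w ∂μ) • (x p * x q))^j) := by
  have hLp : ∀ p (n : ENNReal), n ≠ ⊤ → MemLp (X p) n μ := by
    intro p n hn
    obtain ⟨v, hv⟩ := hg (Pi.single p 1)
    have e : (fun w => ∑ q, (Pi.single p 1 : σ → ℝ) q * X q w) = X p := by
      ext w; simp [Pi.single_apply]
    rw [e] at hv
    have h1 := memLp_id_gaussianReal' (μ := 0) (v := v) n hn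
    rw [← hv, memLp_map_measure_iff (by fun_prop) (hX p)] at h1
    exact h1
  have hXX : ∀ p q, Integrable (fun w => X p w * X q w) μ := by
    intro p q
    exact (hLp p 2 (by simp)).integrable_mul (hLp q 2 (by simp))
  have hadd : ∀ p (n : ENNReal), n ≠ ⊤ → MemLp (fun w => m p + X p w) n μ := by
    intro p n hn
    exact MemLp.add (memLp_const (m p)) (hLp p n hn)
  have hint : ∀ f : Fin (2*h) → σ, Integrable (fun w => ∏ k, (m (f k) + X (f k) w)) μ := by
    intro f
    have := MemLp.prod' (μ := μ) (s := Finset.univ) (f := fun (k : Fin (2*h)) w => m (f k) + X (f k) w)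
      (p := fun _ => ((2*h : ℕ) : ENNReal))
      (fun k _ => hadd (f k) _ (ENNReal.natCast_ne_top (2*h)))
    rw [← memLp_one_iff_integrable]
    refine this.mono_exponent ?_
    rcases Nat.eq_zero_or_pos h with rfl | hp
    · simp
    · simp only [Finset.sum_const, Finset.card_univ, Fintype.card_fin, nsmul_eq_mul]
      rw [ENNReal.mul_inv_cancel]
      · simp
      · exact_mod_cast (by omega)
      · exact ENNReal.natCast_ne_top _
  refine ⟨hint, ?_⟩
  let P : MvPolynomial σ ℝ := ∑ f : Fin (2*h) → σ, (∫ w, ∏ k, (m (f k) + X (f k) w) ∂μ) • ∏ k, MvPolynomial.X (f k)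
  let Q : MvPolynomial σ ℝ := ∑ j ∈ Finset.range (h+1),
      (((2*h).factorial : ℝ) / ((2*h-2*j).factorial * j.factorial)) •
        ((∑ p, m p • MvPolynomial.X p)^(2*h-2*j) *
          ((1/2 : ℝ) • ∑ p, ∑ q, (∫ w, X p w * X q w ∂μ) • (MvPolynomial.X p * MvPolynomial.X q))^j)
  have hPQ : P = Q := by
    refine MvPolynomial.funext fun t => ?_
    have hP : MvPolynomial.eval t P = ∫ w, ((∑ p, t p * m p) + ∑ p, t p * X p w)^(2*h) ∂μ := by
      have : ∀ w, ((∑ p, t p * m p) + ∑ p, t p * X p w)^(2*h) =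
          ∑ f : Fin (2*h) → σ, (∏ k, (m (f k) + X (f k) w)) * ∏ k, t (f k) := by
        intro w
        rw [← Finset.sum_add_distrib, Finset.sum_pow']
        simp only [Fintype.piFinset_univ, ← Finset.prod_mul_distrib]
        refine Finset.sum_congr rfl fun f _ => Finset.prod_congr rfl fun k _ => by ring
      simp_rw [this]
      rw [integral_finsetSum _ (fun f _ => (hint f).mul_const _)]
      simp_rw [integral_mul_const]
      simp [P, MvPolynomial.smul_eval]
    obtain ⟨v, hv⟩ := hg t
    rw [hP, gm_shift _ (by fun_prop) v hv]
    have hK : ∫ w, (∑ p, t p * X p w) * (∑ p, t p * X p w) ∂μ =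
        ∑ p, ∑ q, (∫ w, X p w * X q w ∂μ) * (t p * t q) := by
      have : ∀ w, (∑ p, t p * X p w) * (∑ p, t p * X p w) =
        ∑ p, ∑ q, (X p w * X q w) * (t p * t q) := by
        intro w
        rw [Finset.sum_mul_sum]
        refine Finset.sum_congr rfl fun f _ => Finset.sum_congr rfl fun k _ => by ring
      simp_rw [this]
      rw [integral_finsetSum _ (fun p _ => integrable_finsetSum _ fun q _ => (hXX p q).mul_const _)]
      refine Finset.sum_congr rfl fun p _ => ?_
      rw [integral_finsetSum _ (fun q _ => (hXX p q).mul_const _)]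
      simp_rw [integral_mul_const]
    rw [hK]
    simp only [Q, map_sum, MvPolynomial.smul_eval, map_mul, map_pow, MvPolynomial.eval_X]
    refine Finset.sum_congr rfl fun j _ => ?_
    simp_rw [mul_comm (m _)]
    congr 3
    ring
  have := congrArg (MvPolynomial.aeval x) hPQ
  simpa only [P, Q, map_sum, map_smul, map_mul, map_pow, map_prod, MvPolynomial.aeval_X] using this

noncomputable def gdl {r : ℕ} (a : Fin r → Fin r) : ℝ := ((1 : Matrix (Fin r) (Fin r) ℝ).submatrix a id).det

theorem gdl_bij {r : ℕ} (s : Equiv.Perm (Fin r)) : gdl s = ((Equiv.Perm.sign s : ℤ) : ℝ) := by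
  have := Matrix.det_permute (R := ℝ) s 1
  rw [Matrix.det_one, mul_one] at this
  exact this

theorem gdl_zero {r : ℕ} (a : Fin r → Fin r) (ha : ¬ Function.Injective a) : gdl a = 0 := by
  simp only [Function.Injective, not_forall] at ha
  obtain ⟨i, j, hij, hne⟩ := ha
  exact Matrix.det_zero_of_row_eq hne (by
    ext k
    change (1 : Matrix (Fin r) (Fin r) ℝ) (a i) k = (1 : Matrix (Fin r) (Fin r) ℝ) (a j) k
    rw [hij])

theorem gdl_sq {r : ℕ} : ∑ a : Fin r → Fin r, gdl a * gdl a = (r.factorial : ℝ) := by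
  have : ∀ a : Fin r → Fin r, gdl a * gdl a = if Function.Injective a then 1 else 0 := by
    intro a
    split_ifs with ha
    · have h1 := gdl_bij (Equiv.ofBijective a (Finite.injective_iff_bijective.mp ha))
      rw [Equiv.coe_ofBijective] at h1
      rw [h1, ← Int.cast_mul]
      norm_cast
      simp
    · simp [gdl_zero a ha]
  simp_rw [this]
  rw [Finset.sum_boole]
  have h2 : Fintype.card (Fin r ↪ Fin r) = r.factorial := by
    rw [Fintype.card_embedding_eq]; simp [Nat.descFactorial_self]
  rw [← h2, ← Fintype.card_subtype, Fintype.card_congr (Equiv.subtypeInjectiveEquivEmbedding _ _)]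

theorem gdl_det {r : ℕ} (A : Matrix (Fin r) (Fin r) ℝ) :
    A.det = ∑ b : Fin r → Fin r, (∏ k, A k (b k)) * gdl b := by
  have h1 : A = fun k => ∑ j, A k j • (1 : Matrix (Fin r) (Fin r) ℝ) j := by
    ext k l
    simp [Matrix.one_apply, Finset.sum_apply]
  have h2 := (Matrix.detRowAlternating (R := ℝ) (n := Fin r)).toMultilinearMap.map_sum
    (fun k j => A k j • (1 : Matrix (Fin r) (Fin r) ℝ) j)
  rw [← h1] at h2
  refine h2.trans (Finset.sum_congr rfl fun b _ => ?_)
  exact (Matrix.detRowAlternating (R := ℝ) (n := Fin r)).toMultilinearMap.map_smul_univ _ _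

theorem gdl_fact {r : ℕ} (T : Matrix (Fin r) (Fin r) ℝ) :
    ∑ f : Fin r → Fin r × Fin r, (∏ k, T (f k).1 (f k).2) * (gdl (fun k => (f k).1) * gdl (fun k => (f k).2))
      = r.factorial * T.det := by
  rw [← (Equiv.arrowProdEquivProdArrow (Fin r) (fun _ => Fin r) (fun _ => Fin r)).symm.sum_comp, Fintype.sum_prod_type]
  have : ∀ a : Fin r → Fin r, ∑ b : Fin r → Fin r, (∏ k, T (a k) (b k)) * (gdl a * gdl b) = gdl a * gdl a * T.det := by
    intro a
    have h1 : (T.submatrix a id).det = gdl a * T.det := by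
      rw [gdl, ← Matrix.det_mul]
      congr 1
      ext i j
      simp [Matrix.mul_apply, Matrix.one_apply]
    rw [mul_assoc, ← h1, gdl_det, Finset.mul_sum]
    refine Finset.sum_congr rfl fun b _ => ?_
    simp; ring
  rw [← gdl_sq, Finset.sum_mul, ← Finset.sum_congr rfl fun a _ => this a]
  rfl

theorem gdl_ext {r : ℕ} (a : Fin r → Fin r) :
    (List.ofFn fun k => ExteriorAlgebra.ι ℝ (Pi.single (a k) (1:ℝ) : Fin r → ℝ)).prod =
      gdl a • ((List.finRange r).map fun k => ExteriorAlgebra.ι ℝ (Pi.single k (1:ℝ) : Fin r → ℝ)).prod := by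
  have h1 : (List.ofFn fun k => ExteriorAlgebra.ι ℝ (Pi.single (a k) (1:ℝ) : Fin r → ℝ)).prod =
      ExteriorAlgebra.ιMulti ℝ r (fun k => (Pi.single (a k) (1:ℝ) : Fin r → ℝ)) := by
    rw [ExteriorAlgebra.ιMulti_apply]
  have h2 : ((List.finRange r).map fun k => ExteriorAlgebra.ι ℝ (Pi.single k (1:ℝ) : Fin r → ℝ)).prod =
      ExteriorAlgebra.ιMulti ℝ r (fun k => (Pi.single k (1:ℝ) : Fin r → ℝ)) := by
    rw [ExteriorAlgebra.ιMulti_apply, List.ofFn_eq_map]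
  rw [h1, h2]
  by_cases ha : Function.Injective a
  · have h3 := gdl_bij (Equiv.ofBijective a (Finite.injective_iff_bijective.mp ha))
    rw [Equiv.coe_ofBijective] at h3
    have h4 := (ExteriorAlgebra.ιMulti ℝ r).map_perm (fun k => (Pi.single k (1:ℝ) : Fin r → ℝ))
      (Equiv.ofBijective a (Finite.injective_iff_bijective.mp ha))
    rw [h3]
    refine h4.trans ?_
    rw [Int.cast_smul_eq_zsmul]
    rfl
  · rw [gdl_zero a ha, zero_smul]
    refine AlternatingMap.map_eq_zero_of_not_injective _ _ fun hi => ha ?_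
    intro i j hij
    exact hi (by simp only [hij])

theorem gsign {r : ℕ} (p q : Fin r) :
    ExteriorAlgebra.ι ℝ (Pi.single p (1:ℝ) : Fin r → ℝ) * ExteriorAlgebra.ι ℝ (Pi.single q (1:ℝ)) =
    - (ExteriorAlgebra.ι ℝ (Pi.single q (1:ℝ)) * ExteriorAlgebra.ι ℝ (Pi.single p (1:ℝ))) :=
  eq_neg_of_add_eq_zero_left (ExteriorAlgebra.ι_add_mul_swap _ _)

theorem gself {V : Type} [AddCommGroup V] [Module ℝ V] {y : V} (h : y = -y) : y = 0 := by
  have h2 : y = (1/2 : ℝ) • (y - -y) := by module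
  rw [← h, sub_self, smul_zero] at h2
  exact h2

theorem gXi {r : ℕ} {V : Type} [AddCommGroup V] [Module ℝ V] (K : Fin r → Fin r → Fin r → Fin r → ℝ)
    (hK : ∀ α i β j, K α i β j = K β j α i)
    (y : Fin r → Fin r → Fin r → Fin r → V) (h1 : ∀ α β i j, y β α i j = - y α β i j)
    (h2 : ∀ α β i j, y α β j i = - y α β i j) :
    (1/2 : ℝ) • ∑ p : Fin r × Fin r, ∑ q : Fin r × Fin r, K p.1 p.2 q.1 q.2 • y p.1 q.1 p.2 q.2 =
    ∑ α : Fin r, ∑ β : Fin r, ∑ i : Fin r, ∑ j : Fin r,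
        if α < β ∧ i < j then (K α i β j - K α j β i) • y α β i j else 0 := by
  have z1 : ∀ α i j, y α α i j = 0 := fun α i j => by
    have := h1 α α i j
    exact gself this
  have z2 : ∀ α β i, y α β i i = 0 := fun α β i => by
    have := h2 α β i i
    exact gself this
  have key : ∀ F : Fin r → Fin r → V, (∀ a, F a a = 0) → 
      ∑ a, ∑ b, F a b = ∑ a, ∑ b, if a < b then F a b + F b a else 0 := by
    intro F hF
    have e : ∀ a b, F a b = (if a < b then F a b else 0) + (if b < a then F a b else 0) := by
      intro a b
      rcases lt_trichotomy a b with h | h | h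
      · simp [h, h.not_gt]
      · subst h; simp [hF]
      · simp [h, h.not_gt]
    calc ∑ a, ∑ b, F a b = ∑ a, ∑ b, ((if a < b then F a b else 0) + (if b < a then F a b else 0)) := by
          refine Finset.sum_congr rfl fun a _ => Finset.sum_congr rfl fun b _ => e a b
      _ = (∑ a, ∑ b, if a < b then F a b else 0) + ∑ b, ∑ a, (if b < a then F a b else 0) := by
          simp_rw [Finset.sum_add_distrib]
          congr 1
          exact Finset.sum_comm
      _ = _ := by
          rw [← Finset.sum_add_distrib]
          refine Finset.sum_congr rfl fun a _ => ?_
          rw [← Finset.sum_add_distrib]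
          refine Finset.sum_congr rfl fun b _ => ?_
          split_ifs <;> simp
  have s1 : ∑ p : Fin r × Fin r, ∑ q : Fin r × Fin r, K p.1 p.2 q.1 q.2 • y p.1 q.1 p.2 q.2 =
      ∑ α : Fin r, ∑ β : Fin r, ∑ i : Fin r, ∑ j : Fin r, K α i β j • y α β i j := by
    simp_rw [Fintype.sum_prod_type]
    exact Finset.sum_congr rfl fun a _ => Finset.sum_comm
  rw [s1, key _ (fun a => by simp [z1]), Finset.smul_sum]
  refine Finset.sum_congr rfl fun a _ => ?_
  rw [Finset.smul_sum]
  refine Finset.sum_congr rfl fun b _ => ?_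
  by_cases hab : a < b
  · simp only [hab, if_true, true_and]
    rw [key (fun i j => K a i b j • y a b i j) (fun i => by simp [z2]),
      key (fun i j => K b i a j • y b a i j) (fun i => by simp [z2]), ← Finset.sum_add_distrib, Finset.smul_sum]
    refine Finset.sum_congr rfl fun i _ => ?_
    rw [← Finset.sum_add_distrib, Finset.smul_sum]
    refine Finset.sum_congr rfl fun j _ => ?_
    split_ifs with hij
    · rw [h1 a b i j, h1 a b j i, h2 a b i j, hK b i a j, hK b j a i]
      module
    · simp
  · simp [hab]

theorem gtmul_prod {A ι : Type} [Ring A] [Algebra ℝ A] (a b : ι → A) (l : List ι) :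
    (l.map fun k => a k ⊗ₜ[ℝ] b k).prod = (l.map a).prod ⊗ₜ[ℝ] (l.map b).prod := by
  induction l with
  | nil => rfl
  | cons i l ih => simp [ih]

/-- Expected determinant of a noncentered Gaussian random `r × r` matrix
`M + S` (`r = 2h`, `S` centered Gaussian with second moments `K`): in the algebra of double
forms, with `ω_M = ∑_{α,i} M α i • (e α ⊗ e i)` and
`Ξ = ∑_{α<β, i<j} (K(α,i,β,j) − K(α,j,β,i)) • ((e α * e β) ⊗ (e i * e j))`, one has
`(E (det (M + S))) • (etop ⊗ etop) = ∑_{j=0}^{h} (1/((r−2j)!·j!)) • (ω_M^{r−2j} * Ξ^j)`. -/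
theorem stochasticGBC.expected_det_noncentered
    (h : ℕ) (hh : 0 < h) (r : ℕ) (hr : r = 2 * h)
    (μ : Measure (Matrix (Fin r) (Fin r) ℝ)) [IsProbabilityMeasure μ]
    (hgauss : ∀ L : Matrix (Fin r) (Fin r) ℝ →L[ℝ] ℝ,
      ∃ (a : ℝ) (v : NNReal), μ.map L = gaussianReal a v)
    (hcentered : (∫ S, S ∂μ) = 0)
    (M : Matrix (Fin r) (Fin r) ℝ) :
    let K : Fin r → Fin r → Fin r → Fin r → ℝ :=
      fun α i β j => ∫ S, S α i * S β j ∂μ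
    let e : Fin r → ExteriorAlgebra ℝ (Fin r → ℝ) :=
      fun α => ExteriorAlgebra.ι ℝ (Pi.single α 1)
    let etop : ExteriorAlgebra ℝ (Fin r → ℝ) := ((List.finRange r).map e).prod
    let ω : ExteriorAlgebra ℝ (Fin r → ℝ) ⊗[ℝ] ExteriorAlgebra ℝ (Fin r → ℝ) :=
      ∑ α : Fin r, ∑ i : Fin r, M α i • (e α ⊗ₜ[ℝ] e i)
    let Ξ : ExteriorAlgebra ℝ (Fin r → ℝ) ⊗[ℝ] ExteriorAlgebra ℝ (Fin r → ℝ) :=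
      ∑ α : Fin r, ∑ β : Fin r, ∑ i : Fin r, ∑ j : Fin r,
        if α < β ∧ i < j then
          (K α i β j - K α j β i) • ((e α * e β) ⊗ₜ[ℝ] (e i * e j))
        else 0
    (∫ S, Matrix.det (M + S) ∂μ) • (etop ⊗ₜ[ℝ] etop) =
      ∑ j ∈ Finset.range (h + 1),
        ((1 : ℝ) / ((r - 2 * j).factorial * j.factorial : ℕ)) •
          (ω ^ (r - 2 * j) * Ξ ^ j) := by
  classical
  intro K e etop ω Ξ
  subst hr
  let X : Fin (2*h) × Fin (2*h) → Matrix (Fin (2*h)) (Fin (2*h)) ℝ → ℝ := fun p S => S p.1 p.2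
  have hXm : ∀ p, Measurable (X p) := fun p =>
    (measurable_pi_apply p.2).comp
      (measurable_pi_apply (X := fun _ : Fin (2*h) => Fin (2*h) → ℝ) p.1)
  let Lt : (Fin (2*h) × Fin (2*h) → ℝ) → Matrix (Fin (2*h)) (Fin (2*h)) ℝ →L[ℝ] ℝ := fun t =>
    LinearMap.toContinuousLinearMap
      { toFun := fun S => ∑ p, t p * X p S
        map_add' := fun A B => by simp [X, mul_add, Finset.sum_add_distrib]
        map_smul' := fun c A => by
          simp only [X, Matrix.smul_apply, smul_eq_mul, RingHom.id_apply, Finset.mul_sum]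
          exact Finset.sum_congr rfl fun _ _ => by ring }
  have hLt : ∀ t, (Lt t : Matrix (Fin (2*h)) (Fin (2*h)) ℝ → ℝ) = fun S => ∑ p, t p * X p S :=
    fun t => rfl
  have hg0 : ∀ t : Fin (2*h) × Fin (2*h) → ℝ, ∃ (a : ℝ) (v : NNReal), μ.map (fun S => ∑ p, t p * X p S) = gaussianReal a v := by
    intro t
    rw [← hLt]
    exact hgauss _
  have hXi : ∀ p, Integrable (X p) μ := by
    intro p
    obtain ⟨a, v, hv⟩ := hg0 (Pi.single p 1)
    have e : (fun w => ∑ q, (Pi.single p 1 : _ → ℝ) q * X q w) = X p := by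
      ext w; simp [Pi.single_apply]
    rw [e] at hv
    have h1 := memLp_id_gaussianReal' (μ := a) (v := v) 1 (by simp)
    rw [← hv, memLp_map_measure_iff (by fun_prop) (hXm p).aemeasurable] at h1
    exact memLp_one_iff_integrable.mp h1
  have hX0 : ∀ p, ∫ S, X p S ∂μ = 0 := by
    intro p
    have hrow : ∀ i, Integrable (fun S : Matrix (Fin (2*h)) (Fin (2*h)) ℝ => (S i : Fin (2*h) → ℝ)) μ :=
      fun i => Integrable.of_eval fun j => hXi (i, j)
    have h1 := eval_integral (μ := μ) (E := fun _ : Fin (2*h) => Fin (2*h) → ℝ)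
      (f := fun S : Matrix (Fin (2*h)) (Fin (2*h)) ℝ => (S : Fin (2*h) → Fin (2*h) → ℝ)) hrow p.1
    have h2 := eval_integral (μ := μ) (E := fun _ : Fin (2*h) => ℝ)
      (f := fun S : Matrix (Fin (2*h)) (Fin (2*h)) ℝ => (S p.1 : Fin (2*h) → ℝ))
      (fun j => hXi (p.1, j)) p.2
    have h3 : (∫ S, S ∂μ) p.1 p.2 = 0 := by rw [hcentered]; rfl
    refine h2.symm.trans ?_
    rw [← h1]
    exact h3
  have hg : ∀ t : Fin (2*h) × Fin (2*h) → ℝ, ∃ v : NNReal, μ.map (fun S => ∑ p, t p * X p S) = gaussianReal 0 v := by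
    intro t
    obtain ⟨a, v, hv⟩ := hg0 t
    refine ⟨v, ?_⟩
    have : a = 0 := by
      rw [← integral_id_gaussianReal (μ := a) (v := v), ← hv,
        integral_map (by fun_prop) (by fun_prop), integral_finsetSum _ fun p _ => (hXi p).const_mul _]
      simp_rw [integral_const_mul, hX0]
      simp
    rw [hv, this]
  let x : Fin (2*h) × Fin (2*h) →
      ExteriorAlgebra ℝ (Fin (2*h) → ℝ) ⊗[ℝ] ExteriorAlgebra ℝ (Fin (2*h) → ℝ) :=
    fun p => e p.1 ⊗ₜ[ℝ] e p.2
  have hs : ∀ p q, e p * e q = - (e q * e p) := fun p q => gsign p q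
  have hcomm : ∀ a ∈ Set.range x, ∀ b ∈ Set.range x, a * b = b * a := by
    rintro _ ⟨p, rfl⟩ _ ⟨q, rfl⟩
    simp only [x, Algebra.TensorProduct.tmul_mul_tmul]
    rw [hs p.1 q.1, hs p.2 q.2, TensorProduct.neg_tmul, TensorProduct.tmul_neg, neg_neg]
  letI : CommRing (Algebra.adjoin ℝ (Set.range x)) := Algebra.adjoinCommRingOfComm ℝ hcomm
  let xb : Fin (2*h) × Fin (2*h) → Algebra.adjoin ℝ (Set.range x) :=
    fun p => ⟨x p, Algebra.subset_adjoin ⟨p, rfl⟩⟩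
  let φ := (Algebra.adjoin ℝ (Set.range x)).val
  have hφ : ∀ p, φ (xb p) = x p := fun p => rfl
  obtain ⟨hint, hmain⟩ := gp_main X (fun p => (hXm p).aemeasurable) hg (fun p => M p.1 p.2) h xb
  have hm2 := congrArg φ hmain
  simp only [map_sum, map_smul, map_mul, map_pow, hφ] at hm2
  have hprod : ∀ f : Fin (2*h) → Fin (2*h) × Fin (2*h), φ (∏ k, xb (f k)) =
      (gdl (fun k => (f k).1) * gdl (fun k => (f k).2)) • (etop ⊗ₜ[ℝ] etop) := by
    intro f
    have h1 : φ (∏ k, xb (f k)) = (List.ofFn fun k => x (f k)).prod := by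
      rw [← List.prod_ofFn, map_list_prod, List.map_ofFn]
      rfl
    rw [h1, List.ofFn_eq_map, gtmul_prod (fun k => e (f k).1) (fun k => e (f k).2),
      ← List.ofFn_eq_map, ← List.ofFn_eq_map]
    simp only [e, etop]
    rw [gdl_ext (fun k => (f k).1), gdl_ext (fun k => (f k).2), TensorProduct.smul_tmul_smul]
  simp only [hprod] at hm2
  have hω : ∑ p : Fin (2*h) × Fin (2*h), M p.1 p.2 • x p = ω := by
    rw [Fintype.sum_prod_type]
  have hΞ : (1/2 : ℝ) • ∑ p, ∑ q, (∫ w, X p w * X q w ∂μ) • (x p * x q) = Ξ := by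
    have := gXi K (fun α i β j => by simp only [K, mul_comm])
      (fun α β i j => (e α * e β) ⊗ₜ[ℝ] (e i * e j))
      (fun α β i j => by rw [hs, TensorProduct.neg_tmul])
      (fun α β i j => by rw [hs j i, TensorProduct.tmul_neg])
    refine Eq.trans ?_ this
    simp only [x, X, K, Algebra.TensorProduct.tmul_mul_tmul]
  rw [hω, hΞ] at hm2
  have hdet : ∑ f : Fin (2*h) → Fin (2*h) × Fin (2*h),
      (∫ w, ∏ k, (M (f k).1 (f k).2 + X (f k) w) ∂μ) *
        (gdl (fun k => (f k).1) * gdl (fun k => (f k).2)) =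
      (2*h).factorial * ∫ S, Matrix.det (M + S) ∂μ := by
    rw [← integral_const_mul]
    simp_rw [← gdl_fact]
    refine Eq.trans ?_ (integral_finsetSum Finset.univ (f := fun (f : Fin (2*h) → Fin (2*h) × Fin (2*h))
      (w : Matrix (Fin (2*h)) (Fin (2*h)) ℝ) => (∏ k, (M (f k).1 (f k).2 + X (f k) w)) *
        (gdl (fun k => (f k).1) * gdl (fun k => (f k).2)))
      fun f _ => (hint f).mul_const _).symm
    exact Finset.sum_congr rfl fun f _ => (integral_mul_const _ _).symm
  simp only [smul_smul] at hm2
  rw [← Finset.sum_smul, hdet] at hm2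
  have hne : ((2*h).factorial : ℝ) ≠ 0 := by positivity
  have := congrArg (fun z => ((2*h).factorial : ℝ)⁻¹ • z) hm2
  simp only [smul_smul, Finset.smul_sum] at this
  rw [← mul_assoc, inv_mul_cancel₀ hne, one_mul] at this
  rw [this]
  refine Finset.sum_congr rfl fun j _ => ?_
  congr 1
  push_cast
  field_simp
end
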